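/- (Proposition: Rényi-DP of the Exponential Mechanism.) Let R be a finite nonempty type, ε ≥ 0, Δ ≥ 0, and let q, q′ : R → ℝ satisfy |q(r) − q′(r)| ≤ Δ for all r ∈ R. Define P(r) = exp(ε · q(r)) / Σ_{s∈R} exp(ε · q(s)) and Q(r) = exp(ε · q′(r)) / Σ_{s∈R} exp(ε · q′(s)). Then for every α > 1, the Rényi divergence of order α satisfies (1/(α−1)) · log (Σ_{r∈R} P(r)^α Q(r)^{1−α}) ≤ α (2εΔ)² / 8. -/

import Mathlib

/-!
Let `X = ε * (q - q')` be the log-ratio of the two unnormalised densities. In terms of the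
cumulant generating function `K` of `X` under `Q`, the Rényi divergence is
`(K α - α * K 1) / (α - 1)`. The second derivative of `K` at `t` is the variance of `X` under an
exponentially tilted law, hence at most `((b - a) / 2) ^ 2` when `X` takes values in `[a, b]`. So
`((b - a) / 2) ^ 2 * t ^ 2 / 2 - K t` is convex and vanishes at `0`; its slope from `0` to `1` is
at most its slope from `1` to `α`, which is the required bound.
-/

open MeasureTheory ProbabilityTheory Set Real

section CumulantGeneratingFunction

variable {Ω : Type*} [MeasurableSpace Ω] {μ : Measure Ω} {X : Ω → ℝ} {a b : ℝ}

lemma mem_interior_integrableExpSet_of_mem_Icc [IsFiniteMeasure μ] (hX : AEMeasurable X μ)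
    (hab : ∀ᵐ ω ∂μ, X ω ∈ Icc a b) (t : ℝ) : t ∈ interior (integrableExpSet X μ) := by
  have h_univ : integrableExpSet X μ = univ :=
    eq_univ_of_forall fun _ ↦ integrable_exp_mul_of_mem_Icc hX hab
  simp only [h_univ, interior_univ, mem_univ]

lemma iteratedDeriv_two_cgf_le_of_mem_Icc [IsFiniteMeasure μ] (hX : AEMeasurable X μ)
    (hab : ∀ᵐ ω ∂μ, X ω ∈ Icc a b) (t : ℝ) :
    iteratedDeriv 2 (cgf X μ) t ≤ ((b - a) / 2) ^ 2 := by
  have h_ac : μ.tilted (t * X ·) ≪ μ := tilted_absolutelyContinuous _ _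
  rw [← variance_tilted_mul (mem_interior_integrableExpSet_of_mem_Icc hX hab t)]
  rcases eq_zero_or_neZero μ with rfl | _
  · simpa only [tilted_zero_measure, variance_zero_measure] using sq_nonneg ((b - a) / 2)
  · have := isProbabilityMeasure_tilted (integrable_exp_mul_of_mem_Icc (t := t) hX hab)
    exact variance_le_sq_of_bounded (h_ac hab) (hX.mono_ac h_ac)

lemma convexOn_sq_sub_cgf_of_mem_Icc [IsFiniteMeasure μ] (hX : AEMeasurable X μ)
    (hab : ∀ᵐ ω ∂μ, X ω ∈ Icc a b) :
    ConvexOn ℝ univ fun t ↦ ((b - a) / 2) ^ 2 / 2 * t ^ 2 - cgf X μ t := by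
  set c := ((b - a) / 2) ^ 2
  have h_cgf (t : ℝ) : AnalyticAt ℝ (cgf X μ) t :=
    analyticAt_cgf (mem_interior_integrableExpSet_of_mem_Icc hX hab t)
  have h_deriv₁ (t : ℝ) : HasDerivAt (fun t ↦ c / 2 * t ^ 2 - cgf X μ t)
      (c * t - deriv (cgf X μ) t) t := by
    refine (((hasDerivAt_pow 2 t).const_mul (c / 2)).fun_sub
      (h_cgf t).differentiableAt.hasDerivAt).congr_deriv ?_
    simp only [Nat.cast_ofNat, Nat.add_one_sub_one, pow_one]
    ring
  have h_deriv₂ (t : ℝ) : HasDerivAt (fun t ↦ c * t - deriv (cgf X μ) t)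
      (c - iteratedDeriv 2 (cgf X μ) t) t := by
    rw [iteratedDeriv_succ, iteratedDeriv_one]
    exact (hasDerivAt_const_mul c).fun_sub (h_cgf t).deriv.differentiableAt.hasDerivAt
  have h_deriv : deriv (fun t ↦ c / 2 * t ^ 2 - cgf X μ t) = fun t ↦ c * t - deriv (cgf X μ) t :=
    funext fun t ↦ (h_deriv₁ t).deriv
  refine convexOn_univ_of_deriv2_nonneg (fun t ↦ (h_deriv₁ t).differentiableAt) ?_ fun t ↦ ?_
  · rw [h_deriv]
    exact fun t ↦ (h_deriv₂ t).differentiableAt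
  · rw [Function.iterate_succ_apply, Function.iterate_one, h_deriv, (h_deriv₂ t).deriv]
    exact sub_nonneg.2 (iteratedDeriv_two_cgf_le_of_mem_Icc hX hab t)

lemma inv_mul_cgf_sub_mul_cgf_one_le_of_mem_Icc [IsProbabilityMeasure μ] (hX : AEMeasurable X μ)
    (hab : ∀ᵐ ω ∂μ, X ω ∈ Icc a b) {α : ℝ} (hα₀ : 0 ≤ α) (hα₁ : α ≠ 1) :
    (α - 1)⁻¹ * (cgf X μ α - α * cgf X μ 1) ≤ α * (b - a) ^ 2 / 8 := by
  have h_slope := (convexOn_sq_sub_cgf_of_mem_Icc hX hab).slope_mono (mem_univ 1)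
    ⟨mem_univ 0, zero_ne_one⟩ ⟨mem_univ α, hα₁⟩ hα₀
  have h_sub : α - 1 ≠ 0 := sub_ne_zero.2 hα₁
  simp only [slope_def_field, cgf_zero] at h_slope
  refine sub_nonneg.1 ((sub_nonneg.2 h_slope).trans_eq ?_)
  field_simp
  ring

end CumulantGeneratingFunction

section GibbsDensity

variable {R : Type*} [MeasurableSpace R] {μ : Measure R} {f g : R → ℝ} {a b α : ℝ}

/-- The density proportional to `exp ∘ f` with respect to the base measure `μ`, that is, the
density of `μ.tilted f`. With `f = ε * q` it is the output density of the exponential mechanism.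
It is a real-valued function, with junk value `0` when `exp ∘ f` is not integrable. -/
noncomputable def gibbsDensity (μ : Measure R) (f : R → ℝ) (x : R) : ℝ :=
  exp (f x) / ∫ y, exp (f y) ∂μ

/-- The Rényi divergence of order `α` between the distributions with densities `p` and `q` with
respect to `μ`, meant for `α ≠ 1` and positive densities: the Kullback–Leibler limit at `α = 1` is
not encoded, and where `q` vanishes `q ^ (1 - α)` is `0` rather than `∞` for `1 < α`. -/
noncomputable def renyiDiv (μ : Measure R) (α : ℝ) (p q : R → ℝ) : ℝ :=
  (α - 1)⁻¹ * log (∫ x, p x ^ α * q x ^ (1 - α) ∂μ)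

lemma gibbsDensity_pos [NeZero μ] (hf : Integrable (fun x ↦ exp (f x)) μ) (x : R) :
    0 < gibbsDensity μ f x :=
  div_pos (exp_pos _) (integral_exp_pos hf)

lemma integral_tilted_eq_integral_mul_gibbsDensity (μ : Measure R) (f h : R → ℝ) :
    ∫ x, h x ∂μ.tilted f = ∫ x, h x * gibbsDensity μ f x ∂μ := by
  simp only [integral_tilted, gibbsDensity, smul_eq_mul, mul_comm]

lemma mgf_sub_tilted_one (μ : Measure R) (f g : R → ℝ) :
    mgf (f - g) (μ.tilted g) 1 = (∫ x, exp (f x) ∂μ) / ∫ x, exp (g x) ∂μ := by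
  simp only [mgf, one_mul, integral_exp_tilted, add_sub_cancel]

lemma gibbsDensity_eq_exp_sub_div_mgf_mul [NeZero μ] (hg : Integrable (fun x ↦ exp (g x)) μ)
    (f : R → ℝ) (x : R) :
    gibbsDensity μ f x
      = exp ((f - g) x) / mgf (f - g) (μ.tilted g) 1 * gibbsDensity μ g x := by
  have h_pos : 0 < ∫ y, exp (g y) ∂μ := integral_exp_pos hg
  rw [mgf_sub_tilted_one, gibbsDensity, gibbsDensity, Pi.sub_apply, exp_sub]
  field_simp

lemma integral_gibbsDensity_rpow_mul_rpow [NeZero μ] (hg : Integrable (fun x ↦ exp (g x)) μ)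
    (f : R → ℝ) (α : ℝ) :
    ∫ x, gibbsDensity μ f x ^ α * gibbsDensity μ g x ^ (1 - α) ∂μ
      = mgf (f - g) (μ.tilted g) α / mgf (f - g) (μ.tilted g) 1 ^ α := by
  rw [mgf, ← integral_div, integral_tilted_eq_integral_mul_gibbsDensity]
  congr with x
  have hq := gibbsDensity_pos hg x
  rw [gibbsDensity_eq_exp_sub_div_mgf_mul hg f,
    mul_rpow (div_nonneg (exp_pos _).le mgf_nonneg) hq.le, mul_assoc, ← rpow_add hq,
    add_sub_cancel, rpow_one, div_rpow (exp_pos _).le mgf_nonneg, ← exp_mul, mul_comm α]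

lemma renyiDiv_gibbsDensity_eq_cgf [NeZero μ] (hg : Integrable (fun x ↦ exp (g x)) μ)
    (h_one : Integrable (fun x ↦ exp (1 * (f - g) x)) (μ.tilted g))
    (h_int : Integrable (fun x ↦ exp (α * (f - g) x)) (μ.tilted g)) :
    renyiDiv μ α (gibbsDensity μ f) (gibbsDensity μ g)
      = (α - 1)⁻¹ * (cgf (f - g) (μ.tilted g) α - α * cgf (f - g) (μ.tilted g) 1) := by
  have := isProbabilityMeasure_tilted hg
  rw [renyiDiv, integral_gibbsDensity_rpow_mul_rpow hg,
    log_div (mgf_pos h_int).ne' (rpow_pos_of_pos (mgf_pos h_one) α).ne',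
    log_rpow (mgf_pos h_one), cgf, cgf]

theorem renyiDiv_gibbsDensity_le_of_sub_mem_Icc [NeZero μ]
    (hf : AEMeasurable f μ) (hg : Integrable (fun x ↦ exp (g x)) μ)
    (hfg : ∀ᵐ x ∂μ, f x - g x ∈ Icc a b) (hα₀ : 0 ≤ α) (hα₁ : α ≠ 1) :
    renyiDiv μ α (gibbsDensity μ f) (gibbsDensity μ g) ≤ α * (b - a) ^ 2 / 8 := by
  have := isProbabilityMeasure_tilted hg
  have h_ac : μ.tilted g ≪ μ := tilted_absolutelyContinuous μ g
  have h_meas : AEMeasurable (f - g) (μ.tilted g) :=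
    (hf.sub (aemeasurable_of_aemeasurable_exp hg.aemeasurable)).mono_ac h_ac
  have h_mem : ∀ᵐ x ∂μ.tilted g, (f - g) x ∈ Icc a b := h_ac hfg
  rw [renyiDiv_gibbsDensity_eq_cgf hg (integrable_exp_mul_of_mem_Icc h_meas h_mem)
    (integrable_exp_mul_of_mem_Icc h_meas h_mem)]
  exact inv_mul_cgf_sub_mul_cgf_one_le_of_mem_Icc h_meas h_mem hα₀ hα₁

end GibbsDensity

theorem exponential_mechanism_rdp_general {R : Type*} [MeasurableSpace R] {μ : Measure R}
    [NeZero μ] {ε Δ : ℝ} {q q' : R → ℝ} (hq : AEMeasurable q μ)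
    (hq' : Integrable (fun r ↦ exp (ε * q' r)) μ) (hsens : ∀ᵐ r ∂μ, |q r - q' r| ≤ Δ)
    {α : ℝ} (hα₀ : 0 ≤ α) (hα₁ : α ≠ 1) :
    renyiDiv μ α (gibbsDensity μ fun r ↦ ε * q r) (gibbsDensity μ fun r ↦ ε * q' r)
      ≤ α * (2 * ε * Δ) ^ 2 / 8 := by
  have h_mem : ∀ᵐ r ∂μ, ε * q r - ε * q' r ∈ Icc (-(|ε| * Δ)) (|ε| * Δ) := by
    filter_upwards [hsens] with r hr
    rw [mem_Icc, ← abs_le, ← mul_sub, abs_mul]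
    gcongr
  convert renyiDiv_gibbsDensity_le_of_sub_mem_Icc (hq.const_mul ε) hq' h_mem hα₀ hα₁ using 3
  linear_combination 4 * Δ ^ 2 * (sq_abs ε).symm

/-- **Proposition: Rényi-DP of the Exponential Mechanism.**
For a finite nonempty type `R`, `ε ≥ 0`, `Δ ≥ 0`, and quality scores `q, q'` with
`|q(r) − q'(r)| ≤ Δ` for all `r`, the exponential-mechanism output distributions
`P(r) = exp(ε q(r)) / Σ_s exp(ε q(s))` and `Q(r) = exp(ε q'(r)) / Σ_s exp(ε q'(s))` satisfy,
for every `α > 1`, `(1/(α−1)) · log (Σ_r P(r)^α Q(r)^(1−α)) ≤ α (2εΔ)² / 8`. -/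
theorem exponential_mechanism_rdp {R : Type*} [Fintype R] [Nonempty R]
    (ε Δ : ℝ) (hε : 0 ≤ ε) (hΔ : 0 ≤ Δ) (q q' : R → ℝ)
    (hsens : ∀ r, |q r - q' r| ≤ Δ)
    (P Q : R → ℝ)
    (hP : ∀ r, P r = Real.exp (ε * q r) / ∑ s, Real.exp (ε * q s))
    (hQ : ∀ r, Q r = Real.exp (ε * q' r) / ∑ s, Real.exp (ε * q' s))
    (α : ℝ) (hα : 1 < α) :
    (α - 1)⁻¹ * Real.log (∑ r, P r ^ α * Q r ^ (1 - α)) ≤ α * (2 * ε * Δ) ^ 2 / 8 := by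
  let _ : MeasurableSpace R := ⊤
  simpa only [renyiDiv, gibbsDensity, integral_count, ← hP, ← hQ] using
    exponential_mechanism_rdp_general (μ := .count) (measurable_from_top (f := q)).aemeasurable
      (.of_finite (f := fun r ↦ exp (ε * q' r))) (ae_of_all _ hsens) (by linarith) hα.ne'
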